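/- Let $\mathcal A$ be a finite alphabet with $N\ge 2$ letters and $\mathcal W$ the set of finite words over $\mathcal A$, including the empty word $\emptyset$; write $|w|$ for the length of $w$ and $wi$ for $w$ followed by the letter $i$. Let $\sim$ be an equivalence relation on $\mathcal W$ such that $v\sim w$ implies $|v|=|w|$. Let $m:\mathcal A\to(0,1)$ satisfy $\sum_{a\in\mathcal A}m(a)=1$, and put $m(w_1\cdots w_n)=m(w_1)\cdots m(w_n)$, $m(\emptyset)=1$. Let $p(v,w)=m(w)/\sum_{\hat v\sim v}m(\hat v)$ if $w=\hat v i$ for some $\hat v\sim v$ and $i\in\mathcal A$, and $p(v,w)=0$ otherwise; let $p_0(v,w)=\delta_v(w)$ and $p_n(v,w)=\sum_{u\in\mathcal W}p_{n-1}(v,u)\,p(u,w)$ for $n\ge1$; let $g(v,w)=p_{|w|-|v|}(v,w)$ if $|v|\le|w|$ and $g(v,w)=0$ otherwise. Let $q(v,w)=\frac{g(v,w)}{m(w)}\sum_{\hat v\sim v}m(\hat v)$ for $v\ne w$, and $q(v,v)=1$. Then for all words $v,w\in\mathcal W$ and every letter $i\in\mathcal A$ with $v\not\sim w$ and $v\neq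 wi$, one has $$q(v,wi)=\frac{\sum_{\hat w\sim w}q(v,\hat w)\,m(\hat w)}{\sum_{\hat w\sim w}m(\hat w)}.$$ -/

import Mathlib

namespace Martin

/-- Finite words over the alphabet `A`; `[]` is the empty word and `w ++ [i]` is the word `wi`. -/
abbrev Word (A : Type*) := List A

/-- The mass of a word: `m(w₁⋯wₙ) = m(w₁)⋯m(wₙ)`, `m(∅) = 1`. -/
noncomputable def mW {A : Type*} (m : A → ℝ) (w : Word A) : ℝ := (w.map m).prod

/-- Total mass of the equivalence class of `v`: `Σ_{v̂ ∼ v} m(v̂)`. The class is finite, since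
equivalent words over a finite alphabet are assumed to have the same length. -/
noncomputable def massCl {A : Type*} (sim : Word A → Word A → Prop) (m : A → ℝ)
    (v : Word A) : ℝ :=
  ∑ᶠ u ∈ {u : Word A | sim u v}, mW m u

open Classical in
/-- Transition probability: `p(v,w) = m(w)/(Σ_{v̂∼v} m(v̂))` if `w = v̂i` for some
`v̂ ∼ v` and some letter `i`, and `0` otherwise. -/
noncomputable def pTrans {A : Type*} (sim : Word A → Word A → Prop) (m : A → ℝ)
    (v w : Word A) : ℝ :=
  if ∃ v' : Word A, ∃ i : A, sim v' v ∧ w = v' ++ [i] then mW m w / massCl sim m v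
  else 0

open Classical in
/-- `n`-step transition probabilities: `p₀(v,w) = δ_v(w)`, `pₙ(v,w) = Σ_u pₙ₋₁(v,u) p(u,w)`.
Only the finitely many words `u` with `|u| + 1 = |w|` contribute to the sum. -/
noncomputable def pn {A : Type*} (sim : Word A → Word A → Prop) (m : A → ℝ) :
    ℕ → Word A → Word A → ℝ
  | 0, v, w => if w = v then 1 else 0
  | n + 1, v, w => ∑ᶠ u : Word A, pn sim m n v u * pTrans sim m u w

/-- The Green function: `g(v,w) = p_{|w|−|v|}(v,w)`, and `0` if `|w| < |v|`. -/
noncomputable def green {A : Type*} (sim : Word A → Word A → Prop) (m : A → ℝ)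
    (v w : Word A) : ℝ :=
  if v.length ≤ w.length then pn sim m (w.length - v.length) v w else 0

open Classical in
/-- The function `q(v,w) = g(v,w)·(Σ_{v̂∼v} m(v̂))/m(w)` for `v ≠ w`, and `q(v,v) = 1`. -/
noncomputable def qfun {A : Type*} (sim : Word A → Word A → Prop) (m : A → ℝ)
    (v w : Word A) : ℝ :=
  if v = w then 1 else green sim m v w * massCl sim m v / mW m w

end Martin

/-!
The only states from which the chain can enter `wi` are the words equivalent to `w`, and from each
of them it does so with the same probability `m(wi) / m([w])`, where `m([w])` is the mass of the
class of `w`. For `wi ≠ v`, decomposing the Green function at its last step gives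
`g(v,wi) / m(wi) = (∑_{ŵ ∼ w} g(v,ŵ)) / m([w])`. Multiplication by the mass of the class of `v`
turns the left-hand side into `q(v,wi)` and, since no `ŵ ∼ w` is equal to `v`, each term `g(v,ŵ)`
into `q(v,ŵ) m(ŵ)`.
-/

namespace Martin

variable {A : Type*} {sim : Word A → Word A → Prop} {m : A → ℝ} {v w : Word A} {i : A}

theorem mW_ne_zero (hm : ∀ a, m a ≠ 0) (w : Word A) : mW m w ≠ 0 :=
  List.prod_ne_zero (by simpa [mW] using fun a _ => hm a)

theorem massCl_congr (hsim : Equivalence sim) (h : sim v w) : massCl sim m v = massCl sim m w := by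
  have hclass : {u | sim u v} = {u | sim u w} :=
    Set.ext fun _ => ⟨fun hu => hsim.trans hu h, fun hu => hsim.trans hu (hsim.symm h)⟩
  rw [massCl, massCl, hclass]

theorem pTrans_append_singleton (hsim : Equivalence sim) (u w : Word A) (i : A) :
    pTrans sim m u (w ++ [i]) =
      {u | sim u w}.indicator (fun _ => mW m (w ++ [i]) / massCl sim m w) u := by
  by_cases hu : sim u w
  · rw [pTrans, if_pos ⟨w, i, hsim.symm hu, rfl⟩, massCl_congr hsim hu,
      Set.indicator_of_mem (s := {u | sim u w}) hu]
  · rw [pTrans, if_neg, Set.indicator_of_notMem (s := {u | sim u w}) hu]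
    rintro ⟨w', j, hw', hwj⟩
    obtain ⟨rfl, -⟩ := List.append_inj' hwj rfl
    exact hu (hsim.symm hw')

theorem pn_succ_append_singleton (hsim : Equivalence sim) (hfin : {u | sim u w}.Finite)
    (n : ℕ) (v : Word A) (i : A) :
    pn sim m (n + 1) v (w ++ [i]) =
      (∑ᶠ u ∈ {u | sim u w}, pn sim m n v u) * (mW m (w ++ [i]) / massCl sim m w) := by
  rw [finsum_mem_mul' _ _ hfin, finsum_mem_def, pn]
  refine finsum_congr fun u => ?_
  rw [pTrans_append_singleton hsim, Set.indicator_mul_right]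

theorem green_eq_pn {n : ℕ} (h : w.length = v.length + n) : green sim m v w = pn sim m n v w := by
  rw [green, if_pos (h ▸ Nat.le_add_right _ _), h, Nat.add_sub_cancel_left]

theorem green_eq_zero_of_length_le (h : w.length ≤ v.length) (hvw : v ≠ w) :
    green sim m v w = 0 := by
  rcases h.lt_or_eq with hlt | hlen
  · rw [green, if_neg hlt.not_ge]
  · rw [green_eq_pn (n := 0) hlen, pn, if_neg hvw.symm]

theorem green_append_singleton (hsim : Equivalence sim)
    (hlen : ∀ v w : Word A, sim v w → v.length = w.length) (hfin : {u | sim u w}.Finite)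
    (hvwi : v ≠ w ++ [i]) :
    green sim m v (w ++ [i]) =
      (∑ᶠ u ∈ {u | sim u w}, green sim m v u) * (mW m (w ++ [i]) / massCl sim m w) := by
  have hwi : (w ++ [i]).length = w.length + 1 := List.length_append
  rcases le_or_gt v.length w.length with hle | hlt
  · obtain ⟨n, hn⟩ := Nat.exists_eq_add_of_le hle
    have hclass : ∑ᶠ u ∈ {u | sim u w}, green sim m v u = ∑ᶠ u ∈ {u | sim u w}, pn sim m n v u :=
      finsum_mem_congr rfl fun u hu => green_eq_pn ((hlen u w hu).trans hn)
    rw [green_eq_pn (n := n + 1) (by omega), pn_succ_append_singleton hsim hfin, hclass]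
  · have hclass : ∑ᶠ u ∈ {u | sim u w}, green sim m v u = 0 :=
      finsum_mem_eq_zero_of_forall_eq_zero fun u hu => by
        have hlt' : u.length < v.length := (hlen u w hu).trans_lt hlt
        exact green_eq_zero_of_length_le hlt'.le (ne_of_apply_ne List.length hlt'.ne')
    rw [green_eq_zero_of_length_le (by omega) hvwi, hclass, zero_mul]

theorem qfun_of_ne (h : v ≠ w) : qfun sim m v w = green sim m v w * massCl sim m v / mW m w :=
  if_neg h

theorem finsum_qfun_mul_mW (hm : ∀ a, m a ≠ 0) (hfin : {u | sim u w}.Finite) (hvw : ¬ sim v w) :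
    ∑ᶠ u ∈ {u | sim u w}, qfun sim m v u * mW m u =
      (∑ᶠ u ∈ {u | sim u w}, green sim m v u) * massCl sim m v := by
  rw [finsum_mem_mul' _ _ hfin]
  refine finsum_mem_congr rfl fun u hu => ?_
  have hvu : v ≠ u := fun h => hvw (h ▸ hu)
  rw [qfun_of_ne hvu, div_mul_cancel₀ _ (mW_ne_zero hm u)]

end Martin

open Martin in
theorem qfun_recursion_general {A : Type*} {sim : Word A → Word A → Prop} {m : A → ℝ}
    {v w : Word A} {i : A} (hsim : Equivalence sim)
    (hlen : ∀ v w : Word A, sim v w → v.length = w.length)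
    (hfin : ∀ w : Word A, {u | sim u w}.Finite) (hm : ∀ a, 0 < m a)
    (hvw : ¬ sim v w) (hvwi : v ≠ w ++ [i]) :
    qfun sim m v (w ++ [i]) =
      (∑ᶠ u ∈ {u | sim u w}, qfun sim m v u * mW m u) / ∑ᶠ u ∈ {u | sim u w}, mW m u := by
  have hm0 : ∀ a, m a ≠ 0 := fun a => (hm a).ne'
  have hwi : mW m (w ++ [i]) ≠ 0 := mW_ne_zero hm0 _
  calc qfun sim m v (w ++ [i])
      = green sim m v (w ++ [i]) * massCl sim m v / mW m (w ++ [i]) := qfun_of_ne hvwi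
    _ = (∑ᶠ u ∈ {u | sim u w}, green sim m v u) * massCl sim m v / massCl sim m w := by
      rw [green_append_singleton hsim hlen (hfin w) hvwi]
      field_simp
    _ = (∑ᶠ u ∈ {u | sim u w}, qfun sim m v u * mW m u) / ∑ᶠ u ∈ {u | sim u w}, mW m u := by
      rw [finsum_qfun_mul_mW hm0 (hfin w) hvw, massCl, massCl]

theorem qfun_recursion {A : Type*} [Fintype A] (hA : 2 ≤ Fintype.card A)
    (sim : Martin.Word A → Martin.Word A → Prop) (hsim : Equivalence sim)
    (hlen : ∀ v w : Martin.Word A, sim v w → v.length = w.length)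
    (m : A → ℝ) (hm : ∀ a, m a ∈ Set.Ioo (0 : ℝ) 1) (hm1 : ∑ a, m a = 1)
    (v w : Martin.Word A) (i : A) (hvw : ¬ sim v w) (hvwi : v ≠ w ++ [i]) :
    Martin.qfun sim m v (w ++ [i]) =
      (∑ᶠ w' ∈ {u : Martin.Word A | sim u w}, Martin.qfun sim m v w' * Martin.mW m w') /
        (∑ᶠ w' ∈ {u : Martin.Word A | sim u w}, Martin.mW m w') :=
  qfun_recursion_general hsim hlen
    (fun u => (List.finite_length_eq A u.length).subset fun x hx => hlen x u hx)
    (fun a => (hm a).1) hvw hvwi
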